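/- Suppose p ≥ 3 and let G be a powerful finite p-group. Then d(G) = log_p |Ω_1(G)|. -/

import Mathlib

/-- The minimal size of a generating set of a group. -/
noncomputable def genNum (G : Type*) [Group G] : ℕ :=
  sInf {n | ∃ S : Finset G, S.card = n ∧ Subgroup.closure (S : Set G) = ⊤}

/-- `Ω₁(G)`: the subgroup generated by the elements of order dividing `p`. -/
def Omega1 (p : ℕ) (G : Type*) [Group G] : Subgroup G :=
  Subgroup.closure {g : G | g ^ p = 1}

/-- `G^p`: the subgroup generated by the `p`-th powers. -/
def pPowFin (p : ℕ) (G : Type*) [Group G] : Subgroup G :=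
  Subgroup.closure {x : G | ∃ g : G, g ^ p = x}

/-!
Let `P₀ = G` and `P_{k+1} = P_k^p`. Powerfulness gives `[P_a, P_b] ≤ P_{a+b+1}`, so `x ↦ x ^ p` is a
homomorphism `P_k → G / P_{k+2}` with image `P_{k+1} / P_{k+2}`; by successive approximation every
element of `P_{k+1}` is a `p`-th power of an element of `P_k`, and every `x` in the kernel differs
from an element of order dividing `p` by an element of `P_{k+1}`.

The elements of order dividing `p` form a subgroup: the proper subgroups `⟨x⟩ G^p` are powerful, so
by induction on `|G|` commutators with `x` have order at most that of `x`, and this forces elements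
of small order lying deep in the series to commute. Hence the kernel is `(Ω₁ ∩ P_k) P_{k+1}`, and
multiplying the indices along the series gives `|Ω₁| = |G : G^p|`. Finally `G / G^p` is elementary
abelian and `G^p` lies in the Frattini subgroup, so `|G : G^p| = p ^ d(G)`.
-/

open scoped commutatorElement

section CommutatorCalculus

variable {G : Type*} [Group G] {x y : G} {n : ℕ}

theorem commutatorElement_pow_right (x y : G) (n : ℕ) :
    ⁅x, y ^ n⁆ = (⁅x, y⁆ * y) ^ n * (y ^ n)⁻¹ := by
  rw [← conj_eq_commutatorElement_mul, MulAut.conj_apply, conj_pow, commutatorElement_def]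

theorem commutatorElement_pow_right_of_commute (h : Commute ⁅x, y⁆ y) (n : ℕ) :
    ⁅x, y ^ n⁆ = ⁅x, y⁆ ^ n := by
  rw [commutatorElement_pow_right, h.mul_pow, mul_inv_cancel_right]

theorem mul_pow_eq_pow_mul_pow_mul_commutatorElement_pow (hx : Commute ⁅y, x⁆ x)
    (hy : Commute ⁅y, x⁆ y) (n : ℕ) :
    (x * y) ^ n = x ^ n * y ^ n * ⁅y, x⁆ ^ n.choose 2 := by
  induction n with
  | zero => simp
  | succ n ih =>
    have hswap : y * x ^ n = x ^ n * y * ⁅y, x⁆ ^ n := by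
      rw [((hx.pow_pow n n).mul_right (hy.pow_left n)).eq.symm,
        ← commutatorElement_pow_right_of_commute hx, commutatorElement_def]
      group
    calc (x * y) ^ (n + 1) = x * (y * x ^ n) * y ^ n * ⁅y, x⁆ ^ n.choose 2 := by
          rw [pow_succ', ih]; simp only [mul_assoc]
      _ = x * x ^ n * y * (⁅y, x⁆ ^ n * y ^ n) * ⁅y, x⁆ ^ n.choose 2 := by
          rw [hswap]; simp only [mul_assoc]
      _ = x ^ (n + 1) * y ^ (n + 1) * ⁅y, x⁆ ^ (n + 1).choose 2 := by
          rw [(hy.pow_pow n n).eq, Nat.choose_succ_succ' n 1, Nat.choose_one_right, pow_succ' x,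
            pow_succ' y, pow_add]
          simp only [mul_assoc]

theorem dvd_choose_two_of_odd (hn : Odd n) : n ∣ n.choose 2 := by
  obtain ⟨m, rfl⟩ := hn
  rw [Nat.choose_two_right, Nat.add_sub_cancel, mul_left_comm, Nat.mul_div_cancel_left _ two_pos]
  exact dvd_mul_right _ m

theorem mul_pow_of_odd (hn : Odd n) (hx : Commute ⁅y, x⁆ x) (hy : Commute ⁅y, x⁆ y)
    (h : Commute y (x ^ n)) : (x * y) ^ n = x ^ n * y ^ n := by
  have hpow : ⁅y, x⁆ ^ n = 1 := by
    rw [← commutatorElement_pow_right_of_commute hx, commutatorElement_eq_one_iff_commute.2 h]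
  obtain ⟨m, hm⟩ := dvd_choose_two_of_odd hn
  rw [mul_pow_eq_pow_mul_pow_mul_commutatorElement_pow hx hy, hm, pow_mul, hpow, one_pow, mul_one]

theorem commutatorElement_pow_right_of_odd (hn : Odd n) (h : Commute ⁅y, ⁅x, y⁆⁆ ⁅x, y⁆)
    (hy : Commute ⁅y, ⁅x, y⁆⁆ y) (hpow : Commute y (⁅x, y⁆ ^ n)) : ⁅x, y ^ n⁆ = ⁅x, y⁆ ^ n := by
  rw [commutatorElement_pow_right, mul_pow_of_odd hn h hy hpow, mul_inv_cancel_right]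

end CommutatorCalculus

section Modulo

variable {G : Type*} [Group G] {E : Subgroup G} [E.Normal]

theorem commutatorElement_mem_iff_commute {x y : G} :
    ⁅x, y⁆ ∈ E ↔ Commute (x : G ⧸ E) (y : G ⧸ E) := by
  rw [← commutatorElement_eq_one_iff_commute, ← QuotientGroup.eq_one_iff]
  rfl

theorem commutator_closure_le_iff {S T : Set G} :
    ⁅Subgroup.closure S, Subgroup.closure T⁆ ≤ E ↔ ∀ s ∈ S, ∀ t ∈ T, ⁅s, t⁆ ∈ E := by
  have hbot (H K : Subgroup G) : ⁅H, K⁆ ≤ E ↔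
      ⁅H.map (QuotientGroup.mk' E), K.map (QuotientGroup.mk' E)⁆ = ⊥ := by
    rw [← Subgroup.map_commutator, Subgroup.map_eq_bot_iff, QuotientGroup.ker_mk']
  rw [hbot, Subgroup.commutator_eq_bot_iff_le_centralizer, MonoidHom.map_closure,
    MonoidHom.map_closure, Subgroup.centralizer_closure, Subgroup.closure_le, Set.image_subset_iff]
  refine forall₂_congr fun s _ => ?_
  simp only [Set.mem_preimage, SetLike.mem_coe, Subgroup.mem_centralizer_iff, Set.forall_mem_image,
    commutatorElement_mem_iff_commute, commute_iff_eq, QuotientGroup.coe_mk', eq_comm]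

end Modulo

section PowSubgroup

variable {G : Type*} [Group G] {p : ℕ} {H K : Subgroup G}

/-- The subgroup `H^p` of `G` generated by the `p`-th powers of the elements of `H`. -/
def powSubgroup (p : ℕ) (H : Subgroup G) : Subgroup G :=
  Subgroup.closure ((· ^ p) '' (H : Set G))

theorem pow_mem_powSubgroup {x : G} (hx : x ∈ H) : x ^ p ∈ powSubgroup p H :=
  Subgroup.subset_closure (Set.mem_image_of_mem _ hx)

theorem powSubgroup_le_iff : powSubgroup p H ≤ K ↔ ∀ x ∈ H, x ^ p ∈ K := by
  rw [powSubgroup, Subgroup.closure_le, Set.image_subset_iff]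
  rfl

theorem powSubgroup_le : powSubgroup p H ≤ H :=
  powSubgroup_le_iff.2 fun _ hx => pow_mem hx p

theorem powSubgroup_mono (h : H ≤ K) : powSubgroup p H ≤ powSubgroup p K :=
  powSubgroup_le_iff.2 fun _ hx => pow_mem_powSubgroup (h hx)

theorem powSubgroup_top : powSubgroup p (⊤ : Subgroup G) = pPowFin p G := by
  rw [powSubgroup, pPowFin, Subgroup.coe_top, Set.image_univ]
  rfl

theorem map_powSubgroup {G' : Type*} [Group G'] (f : G →* G') :
    (powSubgroup p H).map f = powSubgroup p (H.map f) := by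
  simp only [powSubgroup, MonoidHom.map_closure, Subgroup.coe_map, Set.image_image, map_pow]

theorem map_pPowFin_of_surjective {G' : Type*} [Group G'] {f : G →* G'}
    (hf : Function.Surjective f) : (pPowFin p G).map f = pPowFin p G' := by
  rw [← powSubgroup_top, map_powSubgroup, Subgroup.map_top_of_surjective f hf, powSubgroup_top]

theorem map_subtype_pPowFin : (pPowFin p H).map H.subtype = powSubgroup p H := by
  rw [← powSubgroup_top, map_powSubgroup, ← MonoidHom.range_eq_map, H.range_subtype]

instance powSubgroup_normal [H.Normal] : (powSubgroup p H).Normal := by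
  rw [Subgroup.normal_iff_map_conj_eq]
  intro g
  rw [map_powSubgroup, Subgroup.normal_iff_map_conj_eq.1 ‹_› g]

theorem commutator_powSubgroup_le (hp : Odd p) (K N : Subgroup G) [K.Normal] [N.Normal] :
    ⁅K, powSubgroup p N⁆ ≤ powSubgroup p ⁅K, N⁆ ⊔ ⁅⁅N, ⁅K, N⁆⁆, ⊤⁆ := by
  set E := powSubgroup p ⁅K, N⁆ ⊔ ⁅⁅N, ⁅K, N⁆⁆, ⊤⁆
  -- Modulo `E`, `⁅y, ⁅x, y⁆⁆` is central, so `⁅x, y ^ p⁆ = ⁅x, y⁆ ^ p`.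
  rw [← K.closure_eq, powSubgroup, commutator_closure_le_iff]
  rintro x hx _ ⟨y, hy, rfl⟩
  have hxy : ⁅x, y⁆ ∈ ⁅K, N⁆ := Subgroup.commutator_mem_commutator hx hy
  have hpow : ⁅(x : G ⧸ E), (y : G ⧸ E)⁆ ^ p = 1 :=
    (QuotientGroup.eq_one_iff (⁅x, y⁆ ^ p)).2 (Subgroup.mem_sup_left (pow_mem_powSubgroup hxy))
  have hcomm (z : G) : Commute ⁅(y : G ⧸ E), ⁅(x : G ⧸ E), (y : G ⧸ E)⁆⁆ z :=
    commutatorElement_mem_iff_commute.1 (Subgroup.mem_sup_right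
      (Subgroup.commutator_mem_commutator (Subgroup.commutator_mem_commutator hy hxy)
        (Subgroup.mem_top z)))
  rw [← QuotientGroup.eq_one_iff]
  exact (commutatorElement_pow_right_of_odd hp (hcomm ⁅x, y⁆) (hcomm y)
    (hpow ▸ Commute.one_right _)).trans hpow

theorem pPowFin_eq_range {A : Type*} [CommGroup A] :
    pPowFin p A = (powMonoidHom p : A →* A).range := by
  rw [← (powMonoidHom p : A →* A).range.closure_eq]
  rfl

end PowSubgroup

section Nilpotent
variable {G : Type*} [Group G]

theorem eq_bot_of_le_commutator_top [Group.IsNilpotent G] {H : Subgroup G} (h : H ≤ ⁅H, ⊤⁆) :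
    H = ⊥ := by
  have hle (n : ℕ) : H ≤ (⊤ : Subgroup G).lowerCentralSeries n := by
    induction n with
    | zero => exact le_top
    | succ n ih =>
      rw [Subgroup.lowerCentralSeries_succ]
      exact h.trans (Subgroup.commutator_mono ih le_rfl)
  obtain ⟨n, hn⟩ := Subgroup.nilpotent_iff_lowerCentralSeries.1 ‹Group.IsNilpotent G›
  exact le_bot_iff.1 (hn ▸ hle n)

theorem le_of_le_sup_commutator_top [Group.IsNilpotent G] {H D : Subgroup G} [D.Normal]
    (h : H ≤ D ⊔ ⁅H, ⊤⁆) : H ≤ D := by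
  rw [← QuotientGroup.ker_mk' D, ← Subgroup.map_eq_bot_iff]
  apply eq_bot_of_le_commutator_top
  calc H.map (QuotientGroup.mk' D) ≤ (D ⊔ ⁅H, ⊤⁆).map (QuotientGroup.mk' D) := Subgroup.map_mono h
    _ = ⁅H.map (QuotientGroup.mk' D), (⊤ : Subgroup G).map (QuotientGroup.mk' D)⁆ := by
      rw [Subgroup.map_sup, Subgroup.map_commutator, QuotientGroup.map_mk'_self, bot_sup_eq]
    _ ≤ ⁅H.map (QuotientGroup.mk' D), ⊤⁆ := Subgroup.commutator_mono le_rfl le_top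

variable {p : ℕ}

theorem commutator_top_powSubgroup_le [Group.IsNilpotent G] (hp : Odd p) {N : Subgroup G}
    [N.Normal] (h : ⁅(⊤ : Subgroup G), N⁆ ≤ powSubgroup p N) :
    ⁅(⊤ : Subgroup G), powSubgroup p N⁆ ≤ powSubgroup p (powSubgroup p N) :=
  le_of_le_sup_commutator_top <| (commutator_powSubgroup_le hp ⊤ N).trans <|
    sup_le_sup (powSubgroup_mono h) <| Subgroup.commutator_mono (Subgroup.commutator_mono le_top h)
      le_rfl

end Nilpotent

section PowSeries

variable (p : ℕ) (G : Type*) [Group G]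

/-- The descending series `P₀ = G`, `P_{k+1} = P_k^p`, indexed from `0`. -/
def powSeries : ℕ → Subgroup G
  | 0 => ⊤
  | k + 1 => powSubgroup p (powSeries k)

instance powSeries_normal (k : ℕ) : (powSeries p G k).Normal := by
  induction k with
  | zero => exact inferInstanceAs (⊤ : Subgroup G).Normal
  | succ k ih => exact powSubgroup_normal

theorem powSeries_antitone : Antitone (powSeries p G) :=
  antitone_nat_of_succ_le fun _ => powSubgroup_le

theorem powSeries_one : powSeries p G 1 = pPowFin p G :=
  powSubgroup_top

variable {p G} {k : ℕ} {x : G}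

theorem pow_mem_powSeries (hx : x ∈ powSeries p G k) : x ^ p ∈ powSeries p G (k + 1) :=
  pow_mem_powSubgroup hx

end PowSeries

section PGroup

variable {p : ℕ} {G : Type*} [Group G]

theorem subsingleton_of_pow_eq_one (hP : IsPGroup p G) (h : ∀ x : G, x ^ p = 1 → x = 1) :
    Subsingleton G := by
  refine subsingleton_of_forall_eq 1 fun x => ?_
  obtain ⟨n, hn⟩ := hP x
  induction n with
  | zero => simpa using hn
  | succ n ih => exact ih (h _ (by rwa [← pow_mul, ← pow_succ]))

variable [Finite G]

theorem pPowFin_ne_top [Nontrivial G] [Group.IsSolvable G] (hP : IsPGroup p G) :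
    pPowFin p G ≠ ⊤ := by
  intro htop
  have hof : Function.Surjective (Abelianization.of (G := G)) := QuotientGroup.mk'_surjective _
  have hsurj : Function.Surjective (powMonoidHom p : Abelianization G →* Abelianization G) := by
    rw [← MonoidHom.range_eq_top, ← pPowFin_eq_range,
      ← map_pPowFin_of_surjective hof, htop, Subgroup.map_top_of_surjective _ hof]
  have := subsingleton_of_pow_eq_one (hP.to_quotient (commutator G)) fun x hx =>
    Finite.injective_iff_surjective.2 hsurj (hx.trans (one_pow p).symm)
  exact (Group.IsSolvable.commutator_lt_top_of_nontrivial G).ne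
    (QuotientGroup.subsingleton_iff.1 this)

theorem powSubgroup_lt [Group.IsNilpotent G] (hP : IsPGroup p G) {H : Subgroup G} (hH : H ≠ ⊥) :
    powSubgroup p H < H := by
  have := H.nontrivial_iff_ne_bot.2 hH
  refine powSubgroup_le.lt_of_ne fun h => pPowFin_ne_top (hP.to_subgroup H) ?_
  apply Subgroup.map_injective H.subtype_injective
  rw [map_subtype_pPowFin, h, ← MonoidHom.range_eq_map, H.range_subtype]

theorem exists_powSeries_eq_bot [Group.IsNilpotent G] (hP : IsPGroup p G) :
    ∃ N, powSeries p G N = ⊥ := by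
  obtain ⟨N, hN⟩ := WellFoundedLT.antitone_chain_condition (powSeries_antitone p G)
  exact ⟨N, by_contra fun h => (powSubgroup_lt hP h).ne (hN (N + 1) N.le_succ).symm⟩

theorem pPowFin_le_frattini [Group.IsNilpotent G] (hP : IsPGroup p G) :
    pPowFin p G ≤ frattini G := by
  refine le_iInf₂ fun M hM => ?_
  have : M.Normal :=
    Subgroup.NormalizerCondition.normal_of_coatom M Group.normalizerCondition_of_isNilpotent hM
  have : Nontrivial (G ⧸ M) := QuotientGroup.nontrivial_iff.2 hM.1
  have hsurj := QuotientGroup.mk'_surjective M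
  have hcomap : (pPowFin p (G ⧸ M)).comap (QuotientGroup.mk' M) = M :=
    (hM.le_iff.1 (QuotientGroup.le_comap_mk' M _)).resolve_left fun h =>
      pPowFin_ne_top (hP.to_quotient M) <|
        Subgroup.comap_injective hsurj (h.trans (Subgroup.comap_top _).symm)
  rw [← hcomap, ← Subgroup.map_le_iff_le_comap, map_pPowFin_of_surjective hsurj]

theorem eq_top_of_sup_pPowFin_eq_top [Group.IsNilpotent G] (hP : IsPGroup p G) {H : Subgroup G}
    (hH : H ⊔ pPowFin p G = ⊤) : H = ⊤ :=
  frattini_nongenerating (top_unique (hH ▸ sup_le_sup_left (pPowFin_le_frattini hP) H))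

end PGroup

section IsPowerful

variable {p : ℕ} {G : Type*} [Group G] {a b k m : ℕ} {x y g : G}

/-- `G` is powerful, in the sense `[G, G] ≤ G^p` appropriate to odd `p`. Oddness belongs to the
definition because the notion for `p = 2` is a different one, `[G, G] ≤ G^4`; that `G` is a finite
`p`-group is assumed separately. -/
structure IsPowerful (p : ℕ) (G : Type*) [Group G] : Prop where
  odd : Odd p
  commutator_le : commutator G ≤ pPowFin p G

namespace IsPowerful

theorem quotient (hG : IsPowerful p G) (E : Subgroup G) [E.Normal] : IsPowerful p (G ⧸ E) where
  odd := hG.odd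
  commutator_le := by
    have hsurj := QuotientGroup.mk'_surjective E
    rw [commutator_def, ← Subgroup.map_top_of_surjective _ hsurj, ← Subgroup.map_commutator,
      ← map_pPowFin_of_surjective hsurj]
    exact Subgroup.map_mono hG.commutator_le

theorem subgroup (hG : IsPowerful p G) {T : Subgroup G} (hT : ⁅T, T⁆ ≤ powSubgroup p T) :
    IsPowerful p T where
  odd := hG.odd
  commutator_le := by
    rwa [← Subgroup.map_le_map_iff_of_injective T.subtype_injective,
      Subgroup.map_subtype_commutator, map_subtype_pPowFin]

variable [Group.IsNilpotent G]

theorem commutator_top_powSeries_le (hG : IsPowerful p G) (k : ℕ) :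
    ⁅(⊤ : Subgroup G), powSeries p G k⁆ ≤ powSeries p G (k + 1) := by
  induction k with
  | zero => exact hG.commutator_le.trans_eq (powSeries_one p G).symm
  | succ k ih => exact commutator_top_powSubgroup_le hG.odd ih

theorem commutator_powSeries_le (hG : IsPowerful p G) (a b : ℕ) :
    ⁅powSeries p G a, powSeries p G b⁆ ≤ powSeries p G (a + b + 1) := by
  induction b with
  | zero =>
    rw [Subgroup.commutator_comm]
    exact hG.commutator_top_powSeries_le a
  | succ b ih =>
    refine (commutator_powSubgroup_le hG.odd _ _).trans (sup_le (powSubgroup_mono ih) ?_)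
    rw [Subgroup.commutator_comm _ ⊤]
    exact (Subgroup.commutator_mono le_rfl ((Subgroup.commutator_le_right _ _).trans ih)).trans
      (hG.commutator_top_powSeries_le _)

theorem commutatorElement_mem (hG : IsPowerful p G) (hm : m ≤ a + b + 1)
    (hx : x ∈ powSeries p G a) (hy : y ∈ powSeries p G b) : ⁅x, y⁆ ∈ powSeries p G m :=
  powSeries_antitone p G hm
    (hG.commutator_powSeries_le a b (Subgroup.commutator_mem_commutator hx hy))

theorem commute_mk (hG : IsPowerful p G) (hm : m ≤ a + b + 1) (hx : x ∈ powSeries p G a)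
    (hy : y ∈ powSeries p G b) : Commute (x : G ⧸ powSeries p G m) (y : G ⧸ powSeries p G m) :=
  commutatorElement_mem_iff_commute.1 (hG.commutatorElement_mem hm hx hy)

theorem mk_mul_pow (hG : IsPowerful p G) (hm : m ≤ a + b + 2) (hx : x ∈ powSeries p G a)
    (hy : y ∈ powSeries p G b) :
    ((x : G ⧸ powSeries p G m) * (y : G ⧸ powSeries p G m)) ^ p =
      (x : G ⧸ powSeries p G m) ^ p * (y : G ⧸ powSeries p G m) ^ p := by
  have hyx : ⁅y, x⁆ ∈ powSeries p G (a + b + 1) := hG.commutatorElement_mem (by omega) hy hx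
  have hcomm (z : G) : Commute ((⁅y, x⁆ : G) : G ⧸ powSeries p G m) z :=
    hG.commute_mk (b := 0) (by omega) hyx (Subgroup.mem_top z)
  exact mul_pow_of_odd hG.odd (hcomm x) (hcomm y)
    (hG.commute_mk (by omega) hy (pow_mem_powSeries hx))

/-- The homomorphism `P_k → G / P_{k+2}` induced by `x ↦ x ^ p`. -/
def powHom (hG : IsPowerful p G) (k : ℕ) : powSeries p G k →* G ⧸ powSeries p G (k + 2) :=
  MonoidHom.mk' (fun x => ((x : G) : G ⧸ powSeries p G (k + 2)) ^ p)
    fun x y => hG.mk_mul_pow (by omega) x.2 y.2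

theorem range_powHom (hG : IsPowerful p G) (k : ℕ) :
    (hG.powHom k).range = (powSeries p G (k + 1)).map (QuotientGroup.mk' _) := by
  apply le_antisymm
  · rintro _ ⟨x, rfl⟩
    exact ⟨(x : G) ^ p, pow_mem_powSeries x.2, rfl⟩
  · rw [Subgroup.map_le_iff_le_comap, powSeries, powSubgroup_le_iff]
    exact fun x hx => ⟨⟨x, hx⟩, rfl⟩

theorem exists_inv_pow_mul_mem (hG : IsPowerful p G) (hg : g ∈ powSeries p G (k + 1)) :
    ∃ x ∈ powSeries p G k, (x ^ p)⁻¹ * g ∈ powSeries p G (k + 2) := by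
  obtain ⟨x, hx⟩ : (g : G ⧸ powSeries p G (k + 2)) ∈ (hG.powHom k).range :=
    hG.range_powHom k ▸ Subgroup.mem_map_of_mem _ hg
  exact ⟨x, x.2, QuotientGroup.eq.1 hx⟩

theorem exists_pow_eq (hG : IsPowerful p G) {N : ℕ} (hN : powSeries p G N = ⊥)
    (hg : g ∈ powSeries p G (k + 1)) : ∃ x ∈ powSeries p G k, x ^ p = g := by
  have happrox (m : ℕ) : ∃ x ∈ powSeries p G k, (x ^ p)⁻¹ * g ∈ powSeries p G (k + m + 1) := by
    induction m with
    | zero => exact ⟨1, one_mem _, by simpa using hg⟩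
    | succ m ih =>
      obtain ⟨x, hx, hxg⟩ := ih
      obtain ⟨y, hy, hyg⟩ := hG.exists_inv_pow_mul_mem hxg
      have hxy := QuotientGroup.eq.1 (hG.mk_mul_pow (m := k + (m + 1) + 1) (by omega) hx hy)
      refine ⟨x * y, mul_mem hx (powSeries_antitone p G (by omega) hy), ?_⟩
      convert mul_mem hxy hyg using 1
      group
  obtain ⟨x, hx, hxg⟩ := happrox N
  have hbot : (x ^ p)⁻¹ * g ∈ powSeries p G N := powSeries_antitone p G (by omega) hxg
  rw [hN, Subgroup.mem_bot] at hbot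
  exact ⟨x, hx, inv_mul_eq_one.1 hbot⟩

theorem exists_mul_pow_eq_one (hG : IsPowerful p G) {N : ℕ} (hN : powSeries p G N = ⊥)
    (hx : x ∈ powSeries p G k) (hxp : x ^ p ∈ powSeries p G (k + 2)) :
    ∃ y ∈ powSeries p G (k + 1), (x * y) ^ p = 1 := by
  have happrox (m : ℕ) :
      ∃ y ∈ powSeries p G (k + 1), (x * y) ^ p ∈ powSeries p G (k + m + 2) := by
    induction m with
    | zero => exact ⟨1, one_mem _, by simpa using hxp⟩
    | succ m ih =>
      obtain ⟨y, hy, hxy⟩ := ih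
      obtain ⟨z, hz, hzp⟩ := hG.exists_pow_eq hN hxy
      have hxyz : ((x * y * z⁻¹) ^ p)⁻¹ * ((x * y) ^ p * z⁻¹ ^ p) ∈
          powSeries p G (k + (m + 1) + 2) :=
        QuotientGroup.eq.1 <| hG.mk_mul_pow (m := k + (m + 1) + 2) (by omega)
          (mul_mem hx (powSeries_antitone p G k.le_succ hy)) (inv_mem hz)
      rw [← hzp, inv_pow, mul_inv_cancel, mul_one, inv_mem_iff, mul_assoc] at hxyz
      exact ⟨y * z⁻¹, mul_mem hy (inv_mem (powSeries_antitone p G (by omega) hz)), hxyz⟩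
  obtain ⟨y, hy, hxy⟩ := happrox N
  have hbot : (x * y) ^ p ∈ powSeries p G N := powSeries_antitone p G (by omega) hxy
  rw [hN, Subgroup.mem_bot] at hbot
  exact ⟨y, hy, hbot⟩

theorem zpowers_sup (hG : IsPowerful p G) (x : G) :
    IsPowerful p (Subgroup.zpowers x ⊔ powSeries p G 1 : Subgroup G) := by
  apply hG.subgroup
  refine le_trans (b := powSeries p G 2) ?_ (powSubgroup_mono le_sup_right)
  have hT : Subgroup.zpowers x ⊔ powSeries p G 1 =
      Subgroup.closure ({x} ∪ (powSeries p G 1 : Set G)) := by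
    rw [Subgroup.closure_union, ← Subgroup.zpowers_eq_closure, Subgroup.closure_eq]
  rw [hT, commutator_closure_le_iff]
  rintro s (rfl | hs) t (rfl | ht)
  · rw [commutatorElement_self]
    exact one_mem _
  · exact hG.commutatorElement_mem (a := 0) (b := 1) le_rfl (Subgroup.mem_top _) ht
  · exact hG.commutatorElement_mem (a := 1) (b := 0) le_rfl hs (Subgroup.mem_top _)
  · exact hG.commutatorElement_mem (a := 1) (b := 1) (by omega) hs ht

theorem commutatorElement_pow_eq_one [Finite G] (hG : IsPowerful p G) (hP : IsPGroup p G)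
    (hmul : ∀ T : Subgroup G, T ≠ ⊤ → IsPowerful p T →
      ∀ (i : ℕ) (x y : T), x ^ p ^ i = 1 → y ^ p ^ i = 1 → (x * y) ^ p ^ i = 1)
    {i : ℕ} (hx : x ^ p ^ i = 1) (g : G) : ⁅x, g⁆ ^ p ^ i = 1 := by
  set T := Subgroup.zpowers x ⊔ powSeries p G 1
  have hxT : x ∈ T := Subgroup.mem_sup_left (Subgroup.mem_zpowers x)
  by_cases hT : T = ⊤
  · have hz : Subgroup.zpowers x = ⊤ := eq_top_of_sup_pPowFin_eq_top hP (powSeries_one p G ▸ hT)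
    obtain ⟨k, rfl⟩ : g ∈ Subgroup.zpowers x := hz ▸ Subgroup.mem_top g
    rw [commutatorElement_eq_one_iff_commute.2 (Commute.self_zpow x k), one_pow]
  · have : T.Normal := Subgroup.Normal.of_commutator_le G <|
      hG.commutator_le.trans ((powSeries_one p G).ge.trans le_sup_right)
    have hconj : (g * x⁻¹ * g⁻¹) ^ p ^ i = 1 := by
      rw [conj_pow, inv_pow, hx, inv_one, mul_one, mul_inv_cancel]
    have hprod := hmul T hT (hG.zpowers_sup x) i ⟨x, hxT⟩
      ⟨g * x⁻¹ * g⁻¹, this.conj_mem _ (inv_mem hxT) g⟩ (Subtype.ext hx) (Subtype.ext hconj)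
    simpa [commutatorElement_def, mul_assoc] using congrArg Subtype.val hprod

end IsPowerful

end IsPowerful

section TorsionLayers

variable {p : ℕ} {G : Type*} [Group G] {a b i j n : ℕ} {x y : G}

/-- The elements of `P_a` of order dividing `p ^ i`. -/
def torsionLayer (p : ℕ) (G : Type*) [Group G] (a i : ℕ) : Set G :=
  {x | x ∈ powSeries p G a ∧ x ^ p ^ i = 1}

/-- Elements of `P_a` and `P_b` of orders dividing `p ^ i` and `p ^ j` commute whenever
`i + j ≤ a + b + 1`, provided that the total depth satisfies `a + b ≥ n`. The bound `n` is the
induction parameter: the property is trivial for large `n` and is wanted for `n = 0`. -/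
def TorsionLayersCommute (p : ℕ) (G : Type*) [Group G] (n : ℕ) : Prop :=
  ∀ ⦃a b i j : ℕ⦄ ⦃x y : G⦄, x ∈ torsionLayer p G a i → y ∈ torsionLayer p G b j →
    n ≤ a + b → i + j ≤ a + b + 1 → Commute x y

theorem pow_mem_torsionLayer (hx : x ∈ torsionLayer p G a i) : x ^ p ∈ torsionLayer p G (a + 1) i :=
  ⟨pow_mem_powSeries hx.1, by rw [pow_right_comm, hx.2, one_pow]⟩

theorem pow_mem_torsionLayer_of_succ (hx : x ∈ torsionLayer p G a (i + 1)) :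
    x ^ p ∈ torsionLayer p G (a + 1) i :=
  ⟨pow_mem_powSeries hx.1, by rw [← pow_mul, ← pow_succ', hx.2]⟩

namespace IsPowerful

variable [Group.IsNilpotent G]

theorem commutatorElement_mem_torsionLayer_left (hG : IsPowerful p G)
    (hcomm : ∀ (i : ℕ) (x g : G), x ^ p ^ i = 1 → ⁅x, g⁆ ^ p ^ i = 1)
    (hx : x ∈ torsionLayer p G a i) (hy : y ∈ powSeries p G b) :
    ⁅x, y⁆ ∈ torsionLayer p G (a + b + 1) i :=
  ⟨hG.commutatorElement_mem le_rfl hx.1 hy, hcomm i x y hx.2⟩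

theorem commutatorElement_mem_torsionLayer_right (hG : IsPowerful p G)
    (hcomm : ∀ (i : ℕ) (x g : G), x ^ p ^ i = 1 → ⁅x, g⁆ ^ p ^ i = 1)
    (hx : x ∈ powSeries p G a) (hy : y ∈ torsionLayer p G b j) :
    ⁅x, y⁆ ∈ torsionLayer p G (a + b + 1) j := by
  refine ⟨hG.commutatorElement_mem le_rfl hx hy.1, ?_⟩
  rw [← commutatorElement_inv, inv_pow, hcomm j y x hy.2, inv_one]

theorem commutatorElement_pow_right_of_torsionLayersCommute (hG : IsPowerful p G)
    (hcomm : ∀ (i : ℕ) (x g : G), x ^ p ^ i = 1 → ⁅x, g⁆ ^ p ^ i = 1)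
    (h : TorsionLayersCommute p G (a + b + 2)) (hx : x ∈ torsionLayer p G a i)
    (hy : y ∈ torsionLayer p G b j) (hij : i + j ≤ a + b + 3) : ⁅x, y ^ p⁆ = ⁅x, y⁆ ^ p := by
  have hci := hG.commutatorElement_mem_torsionLayer_left hcomm hx hy.1
  have hcj := hG.commutatorElement_mem_torsionLayer_right hcomm hx.1 hy
  have hdi := hG.commutatorElement_mem_torsionLayer_right hcomm hy.1 hci
  exact commutatorElement_pow_right_of_odd hG.odd (h hdi hcj (by omega) (by omega))
    (h hdi hy (by omega) (by omega)) (h hy (pow_mem_torsionLayer hci) (by omega) (by omega))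

theorem torsionLayersCommute_of_succ (hG : IsPowerful p G)
    (hcomm : ∀ (i : ℕ) (x g : G), x ^ p ^ i = 1 → ⁅x, g⁆ ^ p ^ i = 1)
    {N : ℕ} (hN : powSeries p G N = ⊥) (h : TorsionLayersCommute p G (n + 1)) :
    TorsionLayersCommute p G n := by
  suffices hle : ∀ (i j a b : ℕ) (x y : G), x ∈ torsionLayer p G a i → y ∈ torsionLayer p G b j →
      n ≤ a + b → i + j ≤ a + b + 1 → i ≤ b → Commute x y by
    intro a b i j x y hx hy hn hij
    obtain hib | hib := le_or_gt i b
    · exact hle i j a b x y hx hy hn hij hib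
    · exact (hle j i b a y x hy hx (by omega) (by omega) (by omega)).symm
  intro i
  induction i with
  | zero =>
    intro j a b x y hx _ _ _ _
    have : x = 1 := by simpa using hx.2
    exact this ▸ Commute.one_left y
  | succ i ih =>
    rintro j a (_ | b) x y hx hy hn hij hib
    · omega
    -- With `y = f ^ p`, the `p`-th power slides across: `⁅x, f ^ p⁆ = ⁅x, f⁆ ^ p = ⁅x ^ p, f⁆`.
    obtain ⟨f, hf, rfl⟩ := hG.exists_pow_eq hN hy.1
    have hfj : f ∈ torsionLayer p G b (j + 1) := ⟨hf, by rw [pow_succ', pow_mul, hy.2]⟩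
    have hfx : ⁅f, x ^ p⁆ = 1 := commutatorElement_eq_one_iff_commute.2
      (ih _ _ _ _ _ (pow_mem_torsionLayer_of_succ hx) hfj (by omega) (by omega) (by omega)).symm
    have hmono : TorsionLayersCommute p G (a + b + 2) := fun _ _ _ _ _ _ hx hy hn =>
      h hx hy (by omega)
    rw [← commutatorElement_eq_one_iff_commute,
      hG.commutatorElement_pow_right_of_torsionLayersCommute hcomm hmono hx hfj (by omega),
      ← commutatorElement_inv, inv_pow, ← hG.commutatorElement_pow_right_of_torsionLayersCommute
        hcomm (add_comm a b ▸ hmono) hfj hx (by omega), hfx, inv_one]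

theorem torsionLayersCommute (hG : IsPowerful p G)
    (hcomm : ∀ (i : ℕ) (x g : G), x ^ p ^ i = 1 → ⁅x, g⁆ ^ p ^ i = 1)
    {N : ℕ} (hN : powSeries p G N = ⊥) : TorsionLayersCommute p G 0 := by
  refine Nat.decreasingInduction (motive := fun n _ => TorsionLayersCommute p G n)
    (fun _ _ h => hG.torsionLayersCommute_of_succ hcomm hN h) ?_ N.zero_le
  intro a b i j x y hx hy hn _
  have hxy : ⁅x, y⁆ ∈ powSeries p G N := hG.commutatorElement_mem (by omega) hx.1 hy.1
  rwa [hN, Subgroup.mem_bot, commutatorElement_eq_one_iff_commute] at hxy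

theorem mul_pow_eq_one_of_torsionLayersCommute (hG : IsPowerful p G)
    (hcomm : ∀ (i : ℕ) (x g : G), x ^ p ^ i = 1 → ⁅x, g⁆ ^ p ^ i = 1)
    (h : TorsionLayersCommute p G 0) (hx : x ^ p = 1) (hy : y ^ p = 1) : (x * y) ^ p = 1 := by
  have hlayer {z : G} (hz : z ^ p = 1) : z ∈ torsionLayer p G 0 1 :=
    ⟨Subgroup.mem_top z, by rwa [pow_one]⟩
  have hyx := hG.commutatorElement_mem_torsionLayer_left hcomm (hlayer hy) (hlayer hx).1
  rw [mul_pow_of_odd hG.odd (h hyx (hlayer hx) (by omega) (by omega))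
    (h hyx (hlayer hy) (by omega) (by omega)) (hx ▸ Commute.one_right y), hx, hy, one_mul]

end IsPowerful

end TorsionLayers

section Omega1

variable {p : ℕ} {G : Type*} [Group G]

instance omega1_normal : (Omega1 p G).Normal := by
  refine ⟨fun x hx g => ?_⟩
  suffices Omega1 p G ≤ (Omega1 p G).comap (MulAut.conj g).toMonoidHom from this hx
  refine (Subgroup.closure_le _).2 fun y (hy : y ^ p = 1) => Subgroup.subset_closure ?_
  change (g * y * g⁻¹) ^ p = 1
  rw [conj_pow, hy, mul_one, mul_inv_cancel]

theorem mem_omega1_iff_of_mul_pow_eq_one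
    (h : ∀ x y : G, x ^ p = 1 → y ^ p = 1 → (x * y) ^ p = 1) {x : G} :
    x ∈ Omega1 p G ↔ x ^ p = 1 := by
  refine ⟨fun hx => ?_, fun hx => Subgroup.subset_closure hx⟩
  induction hx using Subgroup.closure_induction with
  | mem _ hx => exact hx
  | one => exact one_pow p
  | mul x y _ _ hx hy => exact h x y hx hy
  | inv x _ hx => rw [inv_pow, hx, inv_one]

theorem omega1_ne_bot [Nontrivial G] (hP : IsPGroup p G) : Omega1 p G ≠ ⊥ := fun hbot =>
  not_subsingleton G <| subsingleton_of_pow_eq_one hP fun _ hx =>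
    Subgroup.mem_bot.1 (hbot ▸ Subgroup.subset_closure hx)

end Omega1

section Counting

variable {p : ℕ} {G : Type*} [Group G] [Finite G]

theorem card_quotient_lt {E : Subgroup G} (hE : E ≠ ⊥) : Nat.card (G ⧸ E) < Nat.card G := by
  rw [E.card_eq_card_quotient_mul_card_subgroup]
  exact lt_mul_right Nat.card_pos (E.one_lt_card_iff_ne_bot.2 hE)

namespace IsPowerful

theorem mul_pow_eq_one [Group.IsNilpotent G] (hG : IsPowerful p G) (hP : IsPGroup p G) {i : ℕ}
    {x y : G} (hx : x ^ p ^ i = 1) (hy : y ^ p ^ i = 1) : (x * y) ^ p ^ i = 1 := by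
  induction hn : Nat.card G using Nat.strong_induction_on generalizing G i with
  | _ n ih =>
  subst hn
  obtain ⟨N, hN⟩ := exists_powSeries_eq_bot hP
  have hcomm (i : ℕ) (x g : G) (hx : x ^ p ^ i = 1) : ⁅x, g⁆ ^ p ^ i = 1 :=
    hG.commutatorElement_pow_eq_one hP (fun T hT hTp i x y hx hy =>
      ih _ (T.card_le_card_group.lt_of_ne (mt T.eq_top_of_card_eq hT)) hTp (hP.to_subgroup T)
        hx hy rfl) hx g
  have hone (x y : G) (hx : x ^ p = 1) (hy : y ^ p = 1) : (x * y) ^ p = 1 :=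
    hG.mul_pow_eq_one_of_torsionLayersCommute hcomm (hG.torsionLayersCommute hcomm hN) hx hy
  cases i with
  | zero => simp_all
  | succ i =>
    obtain _ | _ := subsingleton_or_nontrivial G
    · exact Subsingleton.elim _ _
    have hmk (z : G) : z ^ p ^ (i + 1) = 1 ↔ (z : G ⧸ Omega1 p G) ^ p ^ i = 1 := by
      rw [← QuotientGroup.mk_pow, QuotientGroup.eq_one_iff, mem_omega1_iff_of_mul_pow_eq_one hone,
        pow_succ, pow_mul]
    rw [hmk] at hx hy ⊢
    exact ih _ (card_quotient_lt (omega1_ne_bot hP)) (hG.quotient _) (hP.to_quotient _) hx hy rfl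

variable [Group.IsNilpotent G]

theorem mem_omega1_iff (hG : IsPowerful p G) (hP : IsPGroup p G) {x : G} :
    x ∈ Omega1 p G ↔ x ^ p = 1 :=
  mem_omega1_iff_of_mul_pow_eq_one fun x y hx hy => by
    simpa only [pow_one] using
      hG.mul_pow_eq_one hP (i := 1) (by rwa [pow_one]) (by rwa [pow_one])

theorem ker_powHom (hG : IsPowerful p G) (hP : IsPGroup p G) (k : ℕ) :
    (hG.powHom k).ker =
      (Omega1 p G ⊓ powSeries p G k ⊔ powSeries p G (k + 1)).subgroupOf (powSeries p G k) := by
  obtain ⟨N, hN⟩ := exists_powSeries_eq_bot hP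
  ext ⟨x, hx⟩
  rw [Subgroup.mem_subgroupOf, MonoidHom.mem_ker]
  refine ⟨fun h => ?_, fun h => ?_⟩
  · obtain ⟨y, hy, hxy⟩ := hG.exists_mul_pow_eq_one hN hx ((QuotientGroup.eq_one_iff (x ^ p)).1 h)
    rw [← mul_inv_cancel_right (Subtype.val _) y]
    exact mul_mem (Subgroup.mem_sup_left ⟨(hG.mem_omega1_iff hP).2 hxy,
      mul_mem hx (powSeries_antitone p G k.le_succ hy)⟩) (Subgroup.mem_sup_right (inv_mem hy))
  · obtain ⟨y, ⟨hy, hyk⟩, z, hz, rfl⟩ := Subgroup.mem_sup_of_normal_right.1 h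
    have hyp : (y : G ⧸ powSeries p G (k + 2)) ^ p = 1 := by
      rw [← QuotientGroup.mk_pow, (hG.mem_omega1_iff hP).1 hy, QuotientGroup.mk_one]
    have hzp : (z : G ⧸ powSeries p G (k + 2)) ^ p = 1 :=
      (QuotientGroup.eq_one_iff (z ^ p)).2 (pow_mem_powSeries hz)
    exact (hG.mk_mul_pow (by omega) hyk hz).trans (by rw [hyp, hzp, one_mul])

theorem relIndex_omega1_inf_mul_relIndex (hG : IsPowerful p G) (hP : IsPGroup p G) (k : ℕ) :
    (Omega1 p G ⊓ powSeries p G (k + 1)).relIndex (Omega1 p G ⊓ powSeries p G k) *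
      (powSeries p G (k + 2)).relIndex (powSeries p G (k + 1)) =
    (powSeries p G (k + 1)).relIndex (powSeries p G k) := by
  have hanti : powSeries p G (k + 1) ≤ powSeries p G k := powSeries_antitone p G k.le_succ
  have hpow : (Omega1 p G ⊓ powSeries p G k ⊔ powSeries p G (k + 1)).relIndex (powSeries p G k) =
      (powSeries p G (k + 2)).relIndex (powSeries p G (k + 1)) := by
    rw [Subgroup.relIndex, ← hG.ker_powHom hP, Subgroup.index_ker, hG.range_powHom,
      ← Subgroup.relIndex_ker, QuotientGroup.ker_mk']
  have hsup : (powSeries p G (k + 1)).relIndex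
      (Omega1 p G ⊓ powSeries p G k ⊔ powSeries p G (k + 1)) =
        (Omega1 p G ⊓ powSeries p G (k + 1)).relIndex (Omega1 p G ⊓ powSeries p G k) := by
    rw [Subgroup.relIndex_sup_right, ← Subgroup.inf_relIndex_left, inf_assoc, inf_eq_right.2 hanti]
  rw [← hpow, ← hsup,
    Subgroup.relIndex_mul_relIndex _ _ _ le_sup_right (sup_le inf_le_right hanti)]

theorem card_omega1_inf_mul_card (hG : IsPowerful p G) (hP : IsPGroup p G) (k : ℕ) :
    Nat.card (Omega1 p G ⊓ powSeries p G k : Subgroup G) * Nat.card (powSeries p G (k + 1)) =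
      Nat.card (powSeries p G k) := by
  obtain ⟨N, hN⟩ := exists_powSeries_eq_bot hP
  replace hN : powSeries p G (k + N) = ⊥ :=
    eq_bot_mono (powSeries_antitone p G (N.le_add_left k)) hN
  induction N generalizing k with
  | zero =>
    have hsucc : powSeries p G (k + 1) = ⊥ := eq_bot_mono (powSeries_antitone p G k.le_succ) hN
    rw [add_zero] at hN
    rw [hsucc, hN, inf_bot_eq, Subgroup.card_bot]
  | succ N ih =>
    have hcard {H K : Subgroup G} (h : H ≤ K) : Nat.card K = Nat.card H * H.relIndex K := by
      simpa using (Subgroup.relIndex_mul_relIndex ⊥ H K bot_le h).symm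
    have hanti (k : ℕ) : powSeries p G (k + 1) ≤ powSeries p G k :=
      powSeries_antitone p G k.le_succ
    rw [hcard (hanti k), ← hG.relIndex_omega1_inf_mul_relIndex hP,
      hcard (inf_le_inf_left (Omega1 p G) (hanti k))]
    nth_rw 1 [hcard (hanti (k + 1))]
    rw [← ih (k + 1) (by rwa [add_right_comm])]
    ring

theorem card_omega1 (hG : IsPowerful p G) (hP : IsPGroup p G) :
    Nat.card (Omega1 p G) = (pPowFin p G).index := by
  have hcard := hG.card_omega1_inf_mul_card hP 0
  rw [powSeries_one, powSeries, inf_top_eq, Subgroup.card_top, ← (pPowFin p G).index_mul_card]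
    at hcard
  exact Nat.eq_of_mul_eq_mul_right Nat.card_pos hcard

end IsPowerful

end Counting

section Generators

variable {p : ℕ} {G : Type*} [Group G]

theorem genNum_eq_rank (G : Type*) [Group G] [Group.FG G] : genNum G = Group.rank G := by
  obtain ⟨S, hS, hS'⟩ := Group.rank_spec G
  refine le_antisymm (Nat.sInf_le ⟨S, hS, hS'⟩) (le_csInf ⟨_, S, hS, hS'⟩ ?_)
  rintro _ ⟨T, rfl, hT⟩
  exact Group.rank_le hT

open scoped IsMulCommutative in
theorem index_pPowFin_dvd_pow_rank [Group.FG G] (h : commutator G ≤ pPowFin p G) :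
    (pPowFin p G).index ∣ p ^ Group.rank G := by
  have : (pPowFin p G).Normal := Subgroup.Normal.of_commutator_le G h
  have : IsMulCommutative (G ⧸ pPowFin p G) :=
    Subgroup.Normal.quotient_commutative_iff_commutator_le.2 h
  have hexp (q : G ⧸ pPowFin p G) : q ^ p = 1 := by
    obtain ⟨x, rfl⟩ := QuotientGroup.mk_surjective q
    exact (QuotientGroup.eq_one_iff (x ^ p)).2 (Subgroup.subset_closure ⟨x, rfl⟩)
  exact (card_dvd_exponent_pow_rank' _ hexp).trans <| pow_dvd_pow p <|
    Group.rank_le_of_surjective _ (QuotientGroup.mk'_surjective (pPowFin p G))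

variable [Fact p.Prime] [Finite G]

theorem prime_le_relIndex_of_lt (hP : IsPGroup p G) {H K : Subgroup G} (h : H < K) :
    p ≤ H.relIndex K := by
  obtain ⟨n, hn⟩ := (hP.to_subgroup K).index (H.subgroupOf K)
  have hn0 : n ≠ 0 := by
    rintro rfl
    exact h.not_ge (Subgroup.relIndex_eq_one.1 hn)
  exact (Nat.le_self_pow hn0 p).trans_eq hn.symm

theorem exists_sup_closure_eq_top_pow_card_le_index (hP : IsPGroup p G) (H : Subgroup G) :
    ∃ S : Finset G, H ⊔ Subgroup.closure (S : Set G) = ⊤ ∧ p ^ S.card ≤ H.index := by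
  classical
  induction H using WellFoundedGT.induction with
  | _ H ih =>
  by_cases hH : H = ⊤
  · exact ⟨∅, by simp [hH]⟩
  obtain ⟨g, hg⟩ : ∃ g, g ∉ H := by simpa [Subgroup.eq_top_iff'] using hH
  have hlt : H < H ⊔ Subgroup.closure {g} := left_lt_sup.2 fun hle => hg (hle (by simp))
  obtain ⟨S, hS, hcard⟩ := ih _ hlt
  refine ⟨insert g S, ?_, ?_⟩
  · rwa [Finset.coe_insert, Set.insert_eq, Subgroup.closure_union, ← sup_assoc]
  · calc p ^ (insert g S).card ≤ p ^ (S.card + 1) :=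
        Nat.pow_le_pow_right (Fact.out : p.Prime).pos (S.card_insert_le g)
      _ = p * p ^ S.card := pow_succ' p _
      _ ≤ H.relIndex (H ⊔ Subgroup.closure {g}) * (H ⊔ Subgroup.closure {g}).index :=
        Nat.mul_le_mul (prime_le_relIndex_of_lt hP hlt) hcard
      _ = H.index := Subgroup.relIndex_mul_index hlt.le

theorem pow_rank_le_index_pPowFin [Group.IsNilpotent G] (hP : IsPGroup p G) :
    p ^ Group.rank G ≤ (pPowFin p G).index := by
  obtain ⟨S, hS, hcard⟩ := exists_sup_closure_eq_top_pow_card_le_index hP (pPowFin p G)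
  rw [sup_comm] at hS
  have hrank := Group.rank_le (eq_top_of_sup_pPowFin_eq_top hP hS)
  exact (Nat.pow_le_pow_right (Fact.out : p.Prime).pos hrank).trans hcard

theorem IsPowerful.pow_rank [Group.IsNilpotent G] (hG : IsPowerful p G) (hP : IsPGroup p G) :
    p ^ Group.rank G = (pPowFin p G).index :=
  (pow_rank_le_index_pPowFin hP).antisymm <|
    Nat.le_of_dvd (pow_pos (Fact.out : p.Prime).pos _) (index_pPowFin_dvd_pow_rank hG.commutator_le)

end Generators

/-- For `p ≥ 3`, a powerful finite `p`-group satisfies `d(G) = log_p |Ω₁(G)|`. -/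
theorem d_eq_log_omega_of_powerful (p : ℕ) (hp : p.Prime) (hp3 : 3 ≤ p)
    (G : Type*) [Group G] [Finite G] (hG : IsPGroup p G)
    (hpow : commutator G ≤ pPowFin p G) :
    p ^ genNum G = Nat.card (Omega1 p G) := by
  have : Fact p.Prime := ⟨hp⟩
  have : Group.IsNilpotent G := hG.isNilpotent
  have hpowerful : IsPowerful p G := ⟨hp.odd_of_ne_two (by omega), hpow⟩
  rw [genNum_eq_rank, hpowerful.pow_rank hG, hpowerful.card_omega1 hG]
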